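/- arXiv:2405.16882 — 2 statements merged into one kernel-verified Lean document; each statement's English description precedes it below -/
import Mathlib

section
/- Let I ⊂ R and J ⊂ T be nonzero proper graded ideals, identified with their extensions to S = R ⊗_K T. Then for every integer k ≥ 1: (a) for every p ∈ Ass(I^k), v_p((IJ)^k) = v_p(I^k) + α(J)·k; and (b) for every q ∈ Ass(J^k), v_q((IJ)^k) = v_q(J^k) + α(I)·k, where all associated primes and v-numbers are computed over S. -/
open MvPolynomial

noncomputable section

/-- The set of associated primes `Ass(L)` of the quotient by an ideal `L`. -/
def assOf {A : Type} [CommRing A] (L : Ideal A) : Set (Ideal A) :=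
  associatedPrimes A (A ⧸ L)

/-- `𝔄` is the stable value `Ass^∞(L)` of `Ass(L^k)` for all large `k`. -/
def IsStableAssValue {A : Type} [CommRing A] (L : Ideal A) (𝔄 : Set (Ideal A)) : Prop :=
  ∃ N : ℕ, ∀ k : ℕ, N ≤ k → assOf (L ^ k) = 𝔄

/-- `Ass^*(L) = ⋃_{k ≥ 1} Ass(L^k)`. -/
def assStar {A : Type} [CommRing A] (L : Ideal A) : Set (Ideal A) :=
  {p | ∃ k : ℕ, 1 ≤ k ∧ p ∈ assOf (L ^ k)}

/-- The local v-number `v_p(L)`: the least degree of a homogeneous `f` with `(L : f) = p`. -/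
def vnum {σ K : Type} [Field K] (L p : Ideal (MvPolynomial σ K)) : ℕ :=
  sInf {d : ℕ | ∃ f : MvPolynomial σ K, f.IsHomogeneous d ∧ L.colon (Ideal.span {f}) = p}

/-- The v-number `v(L) = min_{p ∈ Ass(L)} v_p(L)`. -/
def vnumber {σ K : Type} [Field K] (L : Ideal (MvPolynomial σ K)) : ℕ :=
  sInf {d : ℕ | ∃ p ∈ assOf L, ∃ f : MvPolynomial σ K,
    f.IsHomogeneous d ∧ L.colon (Ideal.span {f}) = p}

/-- The initial degree `α(L)`: the least `d` such that `L` contains a nonzero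
homogeneous element of degree `d`. -/
def alphaDeg {σ K : Type} [Field K] (L : Ideal (MvPolynomial σ K)) : ℕ :=
  sInf {d : ℕ | ∃ f ∈ L, f ≠ 0 ∧ MvPolynomial.IsHomogeneous f d}

/-- A graded (homogeneous) ideal: one containing all homogeneous components
of each of its elements. -/
def IsGradedIdeal {σ K : Type} [Field K] (I : Ideal (MvPolynomial σ K)) : Prop :=
  ∀ f ∈ I, ∀ d : ℕ, homogeneousComponent d f ∈ I

/-- A monomial ideal: an ideal generated by monomials. -/
def IsMonomialIdeal {σ K : Type} [Field K] (I : Ideal (MvPolynomial σ K)) : Prop :=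
  ∃ G : Set (σ →₀ ℕ), I = Ideal.span ((fun a => (monomial a (1 : K))) '' G)

/-! View `S` as `T[x]`. The extension `PS` of an ideal `P` of `T` is generated by constants, so it
is homogeneous for the grading of `T[x]` by `x`-exponents, totally ordered by a monomial order,
whose homogeneous components are single terms `c x ^ a`. A prime `(PS : f)` is therefore attained at
one term of `f`, and hence at its coefficient `c`. Moreover a nonzero polynomial over `K` in the
variables `x` is a nonzerodivisor modulo `PS`.

Let `Q` be a graded ideal of `R`. For nonzero `r ∈ Q` we get `(QP : r f) = (PS : f)`, and taking `r`
of degree `α(Q)` bounds `v_q(QP)` above by `v_q(P) + α(Q)`. Conversely, if `(QP : f) = q`, then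
`(PS : f) = q` and `f ∈ QS`, so every `x`-exponent of `f` has degree at least `α(Q)`, and the
coefficient `c` of `f` with `(PS : c) = q` has degree at most `deg f - α(Q)`. Apply this to
`Q = I ^ k` and `P = J ^ k`, where `α(I ^ k) = α(I) k`, and symmetrically. -/

section GradedRing

open DirectSum

variable {ι σ R : Type*} [CommRing R] [SetLike σ R] [AddSubmonoidClass σ R] {𝒜 : ι → σ}
  {A B p : Ideal R} {f x : R}

theorem exists_isGreatest_decompose [LinearOrder ι] [Decomposition 𝒜] {P : R → Prop} (h₀ : ¬P 0)
    (h : ∃ i, P (decompose 𝒜 x i)) : ∃ i, IsGreatest {i | P (decompose 𝒜 x i)} i := by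
  have hfin : {i | P (decompose 𝒜 x i)}.Finite := by
    refine (DFinsupp.finite_support (decompose 𝒜 x)).subset fun i hi hi₀ => h₀ ?_
    rwa [Set.mem_ofPred_eq, hi₀, ZeroMemClass.coe_zero] at hi
  obtain ⟨i, hi, hmax⟩ := Set.exists_max_image _ id hfin h
  exact ⟨i, hi, hmax⟩

theorem exists_colon_decompose_le [DecidableEq ι] [Decomposition 𝒜]
    (hf : (A.colon {f}).IsPrime) :
    ∃ i, A.colon {(decompose 𝒜 f i : R)} ≤ A.colon {f} := by
  classical
  have hinf : (decompose 𝒜 f).support.inf (fun i => A.colon {(decompose 𝒜 f i : R)}) ≤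
      A.colon {f} := fun x hx => by
    rw [Submodule.mem_finsetInf] at hx
    rw [Submodule.mem_colon_singleton, smul_eq_mul, ← sum_support_decompose 𝒜 f, Finset.mul_sum]
    exact A.sum_mem fun i hi => Submodule.mem_colon_singleton.1 (hx i hi)
  obtain ⟨i, -, hi⟩ := hf.inf_le'.1 hinf
  exact ⟨i, hi⟩

section DecidableEq

variable [DecidableEq ι] [AddCancelCommMonoid ι] [GradedRing 𝒜]

theorem isHomogeneous_colon_singleton (hA : A.IsHomogeneous 𝒜) {s : R}
    (hs : SetLike.IsHomogeneousElem 𝒜 s) : (A.colon {s}).IsHomogeneous 𝒜 := by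
  obtain ⟨c, hc⟩ := hs
  intro i x hx
  rw [Submodule.mem_colon_singleton, smul_eq_mul] at hx ⊢
  rw [← coe_decompose_mul_add_of_right_mem 𝒜 hc]
  exact hA (i + c) hx

theorem mul_decompose_mem_of_mul_mem (hA : A.IsHomogeneous 𝒜) {s : R}
    (hs : SetLike.IsHomogeneousElem 𝒜 s) (hsf : s * f ∈ A) (j : ι) :
    s * (decompose 𝒜 f j : R) ∈ A := by
  obtain ⟨c, hc⟩ := hs
  rw [← coe_decompose_mul_add_of_left_mem 𝒜 hc]
  exact hA (c + j) hsf

theorem exists_isHomogeneousElem_mem_notMem (hB : B.IsHomogeneous 𝒜) (hBp : ¬B ≤ p) :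
    ∃ s ∈ B, SetLike.IsHomogeneousElem 𝒜 s ∧ s ∉ p := by
  classical
  obtain ⟨x, hxB, hxp⟩ := SetLike.not_le_iff_exists.1 hBp
  by_contra! h
  refine hxp (sum_support_decompose 𝒜 x ▸ p.sum_mem fun i _ => ?_)
  exact h _ (hB i hxB) (SetLike.isHomogeneousElem_coe _)

theorem exists_isHomogeneousElem_mul_decompose_mem (hA : A.IsHomogeneous 𝒜) (hp : p.IsPrime)
    (T : Finset ι) (hT : ∀ i ∈ T, ¬A.colon {(decompose 𝒜 f i : R)} ≤ p) :
    ∃ s ∉ p, SetLike.IsHomogeneousElem 𝒜 s ∧ ∀ i ∈ T, s * (decompose 𝒜 f i : R) ∈ A := by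
  have hhom : (T.inf fun i => A.colon {(decompose 𝒜 f i : R)}).IsHomogeneous 𝒜 :=
    Finset.inf_induction (Ideal.IsHomogeneous.top 𝒜) (fun _ h₁ _ h₂ => h₁.inf h₂) fun i _ =>
      isHomogeneous_colon_singleton hA (SetLike.isHomogeneousElem_coe _)
  obtain ⟨s, hs, hshom, hsp⟩ := exists_isHomogeneousElem_mem_notMem hhom (p := p) fun hle => by
    obtain ⟨i, hi, hle⟩ := hp.inf_le'.1 hle
    exact hT i hi hle
  rw [Submodule.mem_finsetInf] at hs
  exact ⟨s, hsp, hshom, fun i hi => Submodule.mem_colon_singleton.1 (hs i hi)⟩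

theorem colon_le_colon_decompose (hA : A.IsHomogeneous 𝒜) (hf : (A.colon {f}).IsHomogeneous 𝒜)
    (i : ι) : A.colon {f} ≤ A.colon {(decompose 𝒜 f i : R)} := by
  classical
  intro x hx
  rw [Submodule.mem_colon_singleton, smul_eq_mul, ← sum_support_decompose 𝒜 x, Finset.sum_mul]
  exact A.sum_mem fun j _ => mul_decompose_mem_of_mul_mem hA (SetLike.isHomogeneousElem_coe _)
    (Submodule.mem_colon_singleton.1 (hf j hx)) i

end DecidableEq

variable [AddCancelCommMonoid ι] [LinearOrder ι] [IsOrderedCancelAddMonoid ι] [GradedRing 𝒜]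

theorem decompose_mul_decompose_mem_of_mul_mem (hA : A.IsHomogeneous 𝒜) {e d : ι}
    (hlt : ∀ i j, e < i ∨ d < j → (decompose 𝒜 x i : R) * decompose 𝒜 f j ∈ A)
    (hxf : x * f ∈ A) : (decompose 𝒜 x e : R) * decompose 𝒜 f d ∈ A := by
  classical
  by_contra hne
  have hmem := hA (e + d) hxf
  rw [decompose_mul, coe_mul_apply, ← Finset.add_sum_erase _ _ (a := (e, d)),
    A.add_mem_iff_left] at hmem
  · exact hne hmem
  · refine A.sum_mem fun ⟨i, j⟩ hij => ?_
    simp only [Finset.mem_erase, Finset.mem_filter] at hij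
    obtain ⟨hne, -, hadd⟩ := hij
    refine hlt i j ?_
    by_contra! hle
    exact hne (Prod.ext_iff.2 ((add_eq_add_iff_eq_and_eq hle.1 hle.2).1 hadd))
  · simp only [Finset.mem_filter, Finset.mem_product, DFinsupp.mem_support_iff, and_true]
    constructor <;> intro h <;> simp [h] at hne

-- If some component of `x` lies outside `p = (A : f)`, take the last such `x_e` and the last `f_d`
-- with `(A : f_d) ≤ p`; some homogeneous `s ∉ p` kills all later components of `f` modulo `A`.
-- Then `s x_e f_d` is the leading component of `s x f ∈ A`, so `s x_e ∈ (A : f_d) ≤ p`.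
theorem isHomogeneous_colon_of_isPrime (hA : A.IsHomogeneous 𝒜) (hp : (A.colon {f}).IsPrime) :
    (A.colon {f}).IsHomogeneous 𝒜 := by
  classical
  intro e₀ x hx
  by_contra he₀
  obtain ⟨e, he, he_max⟩ :=
    exists_isGreatest_decompose (P := (· ∉ A.colon {f})) (by simp) ⟨e₀, he₀⟩
  obtain ⟨d, hd, hd_max⟩ :=
    exists_isGreatest_decompose (P := fun g => A.colon {g} ≤ A.colon {f})
      (by rw [Submodule.colon_singleton_zero, top_le_iff]; exact hp.ne_top)
      (exists_colon_decompose_le (𝒜 := 𝒜) hp)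
  obtain ⟨s, hsp, hs, hsA⟩ := exists_isHomogeneousElem_mul_decompose_mem (f := f) hA hp
    {j ∈ (decompose 𝒜 f).support | d < j} fun j hj hjp =>
      (hd_max hjp).not_gt (Finset.mem_filter.1 hj).2
  have hxA : ∀ i, e < i → ∀ j, (decompose 𝒜 x i : R) * decompose 𝒜 f j ∈ A := fun i hi =>
    mul_decompose_mem_of_mul_mem hA (SetLike.isHomogeneousElem_coe _) <|
      Submodule.mem_colon_singleton.1 <| not_not.1 fun hxi => (he_max hxi).not_gt hi
  have hfA : ∀ j, d < j → s * (decompose 𝒜 f j : R) ∈ A := fun j hj => by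
    by_cases hj₀ : decompose 𝒜 f j = 0
    · simp [hj₀]
    · exact hsA j (Finset.mem_filter.2 ⟨DFinsupp.mem_support_iff.2 hj₀, hj⟩)
  have hmem : (decompose 𝒜 x e : R) * decompose 𝒜 f d ∈ A.colon {s} := by
    refine decompose_mul_decompose_mem_of_mul_mem (isHomogeneous_colon_singleton hA hs)
      (fun i j hij => ?_) ?_ <;> rw [Submodule.mem_colon_singleton, smul_eq_mul]
    · obtain hi | hj := hij
      · exact A.mul_mem_right s (hxA i hi j)
      · rw [mul_right_comm, mul_assoc]
        exact A.mul_mem_left _ (hfA j hj)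
    · exact A.mul_mem_right s (Submodule.mem_colon_singleton.1 hx)
  rw [Submodule.mem_colon_singleton, smul_eq_mul, mul_right_comm] at hmem
  exact (hp.mem_or_mem (hd (Submodule.mem_colon_singleton.2 hmem))).elim he hsp

theorem exists_colon_decompose_eq (hA : A.IsHomogeneous 𝒜) (hp : (A.colon {f}).IsPrime) :
    ∃ i, A.colon {(decompose 𝒜 f i : R)} = A.colon {f} := by
  obtain ⟨i, hi⟩ := exists_colon_decompose_le (𝒜 := 𝒜) hp
  exact ⟨i, hi.antisymm (colon_le_colon_decompose hA (isHomogeneous_colon_of_isPrime hA hp) i)⟩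

end GradedRing

section Coefficients

universe u

variable {σ : Type u} {R : Type*}

theorem nonempty_monomialOrder (σ : Type u) : Nonempty (MonomialOrder.{u, u} σ) := by
  obtain ⟨_, _⟩ := exists_wellFoundedGT σ
  exact ⟨MonomialOrder.lex⟩

theorem weight_toSyn_single (m : MonomialOrder σ) (b : σ →₀ ℕ) :
    Finsupp.weight (fun i => m.toSyn (Finsupp.single i 1)) b = m.toSyn b := by
  simp [Finsupp.weight_apply, ← map_nsmul, ← map_finsuppSum]

attribute [local instance] MvPolynomial.weightedGradedAlgebra

theorem decompose_toSyn [CommSemiring R] (m : MonomialOrder σ) (b : σ →₀ ℕ)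
    (f : MvPolynomial σ R) :
    (DirectSum.decompose (weightedHomogeneousSubmodule R fun i => m.toSyn (Finsupp.single i 1)) f
      (m.toSyn b) : MvPolynomial σ R) = monomial b (coeff b f) := by
  classical
  refine (weightedDecomposition.decompose'_apply R _ f _).trans ?_
  ext c
  rw [coeff_weightedHomogeneousComponent, weight_toSyn_single, coeff_monomial]
  simp only [EmbeddingLike.apply_eq_iff_eq, eq_comm]
  split_ifs with h <;> simp [h]

theorem degree_map_of_injective [CommSemiring R] {S : Type*} [CommSemiring S]
    (m : MonomialOrder σ) {φ : R →+* S} (hφ : Function.Injective φ) (f : MvPolynomial σ R) :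
    m.degree (map φ f) = m.degree f := by
  rw [MonomialOrder.degree, MonomialOrder.degree, support_map_of_injective f hφ]

variable [CommRing R] {Q : Ideal R}

theorem colon_map_C_monomial (b : σ →₀ ℕ) (r : R) :
    (Q.map (C (σ := σ))).colon {monomial b r} = (Q.map C).colon {C r} := by
  ext x
  simp only [Submodule.mem_colon_singleton, smul_eq_mul, mem_map_C_iff]
  simp only [mul_comm x (C r), coeff_C_mul, mul_comm r]
  refine ⟨fun h a => by simpa only [coeff_mul_monomial] using h (a + b), fun h a => ?_⟩
  rw [coeff_mul_monomial']
  split_ifs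
  exacts [h _, Q.zero_mem]

theorem exists_colon_C_coeff_eq {f : MvPolynomial σ R} (hf : ((Q.map C).colon {f}).IsPrime) :
    ∃ a, (Q.map C).colon {C (coeff a f)} = (Q.map C).colon {f} := by
  classical
  obtain ⟨m⟩ := nonempty_monomialOrder σ
  have hQ : (Q.map (C (σ := σ))).IsHomogeneous
      (weightedHomogeneousSubmodule R fun i => m.toSyn (Finsupp.single i 1)) :=
    Ideal.homogeneous_span _ _ <| by
      rintro _ ⟨r, -, rfl⟩
      exact ⟨0, isWeightedHomogeneous_C _ r⟩
  obtain ⟨i, hi⟩ := exists_colon_decompose_eq hQ hf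
  obtain ⟨a, rfl⟩ := m.toSyn.surjective i
  rw [decompose_toSyn, colon_map_C_monomial] at hi
  exact ⟨a, hi⟩

theorem map_mem_nonZeroDivisors_of_ne_zero {K : Type*} [Field K] (φ : K →+* R)
    {f : MvPolynomial σ K} (hf : f ≠ 0) : map φ f ∈ nonZeroDivisors (MvPolynomial σ R) := by
  nontriviality R
  obtain ⟨m⟩ := nonempty_monomialOrder σ
  refine m.mem_nonZeroDivisors_of_leadingCoeff_mem_nonZeroDivisors (IsUnit.mem_nonZeroDivisors ?_)
  rw [MonomialOrder.leadingCoeff, degree_map_of_injective m φ.injective, coeff_map]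
  exact (m.leadingCoeff_ne_zero_iff.2 hf).isUnit.map φ

theorem mem_map_C_of_map_mul_mem {K : Type*} [Field K] (φ : K →+* R) {r : MvPolynomial σ K}
    (hr : r ≠ 0) {f : MvPolynomial σ R} (h : map φ r * f ∈ Q.map C) : f ∈ Q.map C := by
  rw [← Ideal.mk_ker (I := Q), ← ker_map, RingHom.mem_ker] at h ⊢
  rw [map_mul, map_map] at h
  exact (mul_left_mem_nonZeroDivisors_eq_zero_iff (map_mem_nonZeroDivisors_of_ne_zero _ hr)).1 h

end Coefficients

section Colon

variable {F A B : Type*} [CommRing A] [CommRing B] [EquivLike F A B] [RingEquivClass F A B]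

theorem colon_map_of_equiv (e : F) (L : Ideal A) (f : A) :
    (L.map e).colon {e f} = (L.colon {f}).map e := by
  ext x
  obtain ⟨x, rfl⟩ := EquivLike.surjective e x
  simp only [Submodule.mem_colon_singleton, smul_eq_mul, ← map_mul, Ideal.mem_map_of_equiv,
    EmbeddingLike.apply_eq_iff_eq, exists_eq_right]

end Colon

section GradedIdeal

variable {σ τ K : Type} [Field K] {L : Ideal (MvPolynomial σ K)}

attribute [local instance] MvPolynomial.gradedAlgebra

theorem isGradedIdeal_iff :
    IsGradedIdeal L ↔ L.IsHomogeneous (homogeneousSubmodule σ K) := by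
  refine ⟨fun h d f hf => ?_, fun h f hf d => ?_⟩
  · exact (decomposition.decompose'_apply f d : _) ▸ h f hf d
  · exact (decomposition.decompose'_apply f d : _) ▸ h d hf

theorem IsGradedIdeal.pow (hL : IsGradedIdeal L) (k : ℕ) : IsGradedIdeal (L ^ k) := by
  rw [isGradedIdeal_iff] at hL ⊢
  induction k with
  | zero => rw [pow_zero, Ideal.one_eq_top]; exact Ideal.IsHomogeneous.top _
  | succ k ih => rw [pow_succ]; exact ih.mul hL

theorem IsGradedIdeal.map_rename (hL : IsGradedIdeal L) (i : σ → τ) :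
    IsGradedIdeal (L.map (rename (R := K) i)) := by
  rw [isGradedIdeal_iff] at hL ⊢
  obtain ⟨s, rfl⟩ := (Ideal.IsHomogeneous.iff_exists _ _).1 hL
  rw [Ideal.map_span]
  refine Ideal.homogeneous_span _ _ ?_
  rintro _ ⟨_, ⟨⟨f, d, hf⟩, -, rfl⟩, rfl⟩
  exact ⟨d, IsHomogeneous.rename_isHomogeneous hf⟩

theorem IsGradedIdeal.exists_isHomogeneous_colon_eq (hL : IsGradedIdeal L)
    {f : MvPolynomial σ K} (hf : (L.colon {f}).IsPrime) :
    ∃ (d : ℕ) (g : MvPolynomial σ K), g.IsHomogeneous d ∧ L.colon {g} = L.colon {f} := by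
  obtain ⟨d, hd⟩ := exists_colon_decompose_eq (isGradedIdeal_iff.1 hL) hf
  exact ⟨d, _, SetLike.coe_mem (DirectSum.decompose (homogeneousSubmodule σ K) f d), hd⟩

theorem homogeneousComponent_degree_ne_zero {f : MvPolynomial σ K} {a : σ →₀ ℕ}
    (ha : a ∈ f.support) : homogeneousComponent a.degree f ≠ 0 := fun h₀ => by
  rw [MvPolynomial.ext_iff] at h₀
  simpa [coeff_homogeneousComponent, mem_support_iff.1 ha] using h₀ a

theorem IsGradedIdeal.le_idealOfVars_pow_alphaDeg (hL : IsGradedIdeal L) :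
    L ≤ idealOfVars σ K ^ alphaDeg L := fun f hf => by
  rw [mem_pow_idealOfVars_iff]
  exact fun a ha => Nat.sInf_le ⟨homogeneousComponent a.degree f, hL f hf _,
    homogeneousComponent_degree_ne_zero ha, homogeneousComponent_isHomogeneous _ _⟩

theorem IsGradedIdeal.exists_isHomogeneous_alphaDeg (hL : IsGradedIdeal L) (hne : L ≠ ⊥) :
    ∃ f ∈ L, f ≠ 0 ∧ f.IsHomogeneous (alphaDeg L) := by
  obtain ⟨f, hf, hf₀⟩ := Submodule.exists_mem_ne_zero_of_ne_bot hne
  obtain ⟨a, ha⟩ := support_nonempty.2 hf₀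
  exact Nat.sInf_mem (s := {d | ∃ f ∈ L, f ≠ 0 ∧ f.IsHomogeneous d})
    ⟨a.degree, homogeneousComponent a.degree f, hL f hf _,
      homogeneousComponent_degree_ne_zero ha, homogeneousComponent_isHomogeneous _ _⟩

theorem IsGradedIdeal.alphaDeg_pow (hL : IsGradedIdeal L) (hne : L ≠ ⊥) (k : ℕ) :
    alphaDeg (L ^ k) = alphaDeg L * k := by
  refine le_antisymm ?_ ?_
  · obtain ⟨f, hf, hf₀, hfd⟩ := hL.exists_isHomogeneous_alphaDeg hne
    exact Nat.sInf_le ⟨f ^ k, Ideal.pow_mem_pow hf k, pow_ne_zero k hf₀, hfd.pow k⟩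
  · obtain ⟨f, hf, hf₀, hfd⟩ :=
      (hL.pow k).exists_isHomogeneous_alphaDeg (pow_ne_zero k hne)
    have hle := Ideal.pow_right_mono hL.le_idealOfVars_pow_alphaDeg k hf
    obtain ⟨a, ha⟩ := support_nonempty.2 hf₀
    rw [← pow_mul, mem_pow_idealOfVars_iff] at hle
    exact (hle a ha).trans_eq (not_not.1 fun h => mem_support_iff.1 ha (hfd.coeff_eq_zero h))

end GradedIdeal

section SumVariables

variable {σ τ K : Type} [Field K]

theorem map_sumComm_map_rename_inl (L : Ideal (MvPolynomial σ K)) :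
    (L.map (rename (R := K) (Sum.inl : σ → σ ⊕ τ))).map (renameEquiv K (Equiv.sumComm σ τ)) =
      L.map (rename (R := K) Sum.inr) := by
  refine (Ideal.map_mapₐ (rename Sum.inl) (rename (R := K) (Equiv.sumComm σ τ))).trans ?_
  rw [rename_comp_rename]
  rfl

theorem map_sumComm_map_rename_inr (L : Ideal (MvPolynomial τ K)) :
    (L.map (rename (R := K) (Sum.inr : τ → σ ⊕ τ))).map (renameEquiv K (Equiv.sumComm σ τ)) =
      L.map (rename (R := K) Sum.inl) := by
  refine (Ideal.map_mapₐ (rename Sum.inr) (rename (R := K) (Equiv.sumComm σ τ))).trans ?_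
  rw [rename_comp_rename]
  rfl

theorem sumAlgEquiv_rename_inl (f : MvPolynomial σ K) :
    sumAlgEquiv K σ τ (rename Sum.inl f) = map C f :=
  DFunLike.congr_fun (sumAlgEquiv_comp_rename_inl K σ τ) f

theorem sumAlgEquiv_rename_inr (f : MvPolynomial τ K) :
    sumAlgEquiv K σ τ (rename Sum.inr f) = C f :=
  DFunLike.congr_fun (sumAlgEquiv_comp_rename_inr K σ τ) f

theorem map_sumAlgEquiv_map_rename_inr (P : Ideal (MvPolynomial τ K)) :
    (P.map (rename (R := K) Sum.inr)).map (sumAlgEquiv K σ τ) = P.map C := by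
  refine (Ideal.map_mapₐ (rename Sum.inr) (sumAlgEquiv K σ τ).toAlgHom).trans ?_
  rw [sumAlgEquiv_comp_rename_inr]
  rfl

theorem mem_map_rename_inr_of_rename_inl_mul_mem {P : Ideal (MvPolynomial τ K)}
    {r : MvPolynomial σ K} (hr : r ≠ 0) {f : MvPolynomial (σ ⊕ τ) K}
    (h : rename Sum.inl r * f ∈ P.map (rename (R := K) Sum.inr)) :
    f ∈ P.map (rename (R := K) (Sum.inr : τ → σ ⊕ τ)) := by
  have hΦ := Ideal.mem_map_of_mem (sumAlgEquiv K σ τ) h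
  rw [map_mul, sumAlgEquiv_rename_inl, map_sumAlgEquiv_map_rename_inr] at hΦ
  have hf := mem_map_C_of_map_mul_mem C hr hΦ
  rw [← map_sumAlgEquiv_map_rename_inr, Ideal.mem_map_of_equiv] at hf
  simpa only [EmbeddingLike.apply_eq_iff_eq, exists_eq_right] using hf

theorem mem_map_rename_inl_of_rename_inr_mul_mem {Q : Ideal (MvPolynomial σ K)}
    {t : MvPolynomial τ K} (ht : t ≠ 0) {f : MvPolynomial (σ ⊕ τ) K}
    (h : rename Sum.inr t * f ∈ Q.map (rename (R := K) Sum.inl)) :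
    f ∈ Q.map (rename (R := K) (Sum.inl : σ → σ ⊕ τ)) := by
  have hswap := Ideal.mem_map_of_mem (renameEquiv K (Equiv.sumComm σ τ)) h
  rw [map_mul, map_sumComm_map_rename_inl, renameEquiv_apply, rename_rename] at hswap
  have hf := mem_map_rename_inr_of_rename_inl_mul_mem ht hswap
  rw [← map_sumComm_map_rename_inl, Ideal.mem_map_of_equiv] at hf
  simpa only [EmbeddingLike.apply_eq_iff_eq, exists_eq_right] using hf

theorem coeff_coeff_sumAlgEquiv (f : MvPolynomial (σ ⊕ τ) K) (a : σ →₀ ℕ) (b : τ →₀ ℕ) :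
    coeff b (coeff a (sumAlgEquiv K σ τ f)) = coeff (a.sumElim b) f :=
  AddMonoidAlgebra.coeff_domCongr (R := K) (A := K) Finsupp.sumFinsuppAddEquivProdFinsupp f (a, b)

theorem degree_sumElim (a : σ →₀ ℕ) (b : τ →₀ ℕ) :
    (a.sumElim b).degree = a.degree + b.degree := by
  rw [Finsupp.sumElim_eq_add, map_add, Finsupp.degree_mapDomain, Finsupp.degree_mapDomain]

theorem degree_add_degree_eq_of_coeff_sumAlgEquiv_ne_zero {f : MvPolynomial (σ ⊕ τ) K} {d : ℕ}
    (hf : f.IsHomogeneous d) {a : σ →₀ ℕ} {b : τ →₀ ℕ}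
    (hab : coeff b (coeff a (sumAlgEquiv K σ τ f)) ≠ 0) : a.degree + b.degree = d := by
  rw [coeff_coeff_sumAlgEquiv] at hab
  rw [← degree_sumElim]
  exact not_imp_comm.1 hf.coeff_eq_zero hab

theorem exists_isHomogeneous_coeff_sumAlgEquiv {f : MvPolynomial (σ ⊕ τ) K} {d : ℕ}
    (hf : f.IsHomogeneous d) {a : σ →₀ ℕ} (ha : a ∈ (sumAlgEquiv K σ τ f).support) :
    ∃ e, a.degree + e = d ∧ (coeff a (sumAlgEquiv K σ τ f)).IsHomogeneous e := by
  obtain ⟨b, hb⟩ := MvPolynomial.ne_zero_iff.1 (mem_support_iff.1 ha)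
  refine ⟨b.degree, degree_add_degree_eq_of_coeff_sumAlgEquiv_ne_zero hf hb, fun c hc => ?_⟩
  have hbc := (degree_add_degree_eq_of_coeff_sumAlgEquiv_ne_zero hf hc).trans
    (degree_add_degree_eq_of_coeff_sumAlgEquiv_ne_zero hf hb).symm
  rw [Pi.one_def, ← Finsupp.degree_eq_weight_one]
  exact add_left_cancel hbc

theorem IsGradedIdeal.alphaDeg_le_degree {Q : Ideal (MvPolynomial σ K)} (hQ : IsGradedIdeal Q)
    {f : MvPolynomial (σ ⊕ τ) K} (hf : f ∈ Q.map (rename (R := K) Sum.inl)) {a : σ →₀ ℕ}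
    (ha : a ∈ (sumAlgEquiv K σ τ f).support) : alphaDeg Q ≤ a.degree := by
  have hle : Q.map (rename (R := K) Sum.inl) ≤
      (idealOfVars σ (MvPolynomial τ K) ^ alphaDeg Q).comap (sumAlgEquiv K σ τ) := by
    refine Ideal.map_le_iff_le_comap.2 fun r hr => ?_
    rw [Ideal.mem_comap, Ideal.mem_comap, sumAlgEquiv_rename_inl, mem_pow_idealOfVars_iff]
    exact fun b hb => (mem_pow_idealOfVars_iff _ _).1 (hQ.le_idealOfVars_pow_alphaDeg hr) b
      (support_map_subset _ _ hb)
  exact (mem_pow_idealOfVars_iff _ _).1 (hle hf) a ha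

theorem exists_colon_rename_inr_coeff_eq {P : Ideal (MvPolynomial τ K)}
    {f : MvPolynomial (σ ⊕ τ) K} (hf : ((P.map (rename (R := K) Sum.inr)).colon {f}).IsPrime) :
    ∃ a, (P.map (rename (R := K) Sum.inr)).colon
        {rename Sum.inr (coeff a (sumAlgEquiv K σ τ f))} =
      (P.map (rename (R := K) Sum.inr)).colon {f} := by
  set Φ := sumAlgEquiv K σ τ
  have hΦ := colon_map_of_equiv Φ (P.map (rename (R := K) (Sum.inr : τ → σ ⊕ τ)))
  have hprime : ((P.map C).colon {Φ f}).IsPrime := by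
    rw [← map_sumAlgEquiv_map_rename_inr, hΦ]
    exact Ideal.map_isPrime_of_equiv Φ
  obtain ⟨a, ha⟩ := exists_colon_C_coeff_eq hprime
  rw [← sumAlgEquiv_rename_inr, ← map_sumAlgEquiv_map_rename_inr, hΦ, hΦ] at ha
  exact ⟨a, (Ideal.relIsoOfBijective Φ Φ.bijective).symm.injective ha⟩

variable {Q : Ideal (MvPolynomial σ K)} {P : Ideal (MvPolynomial τ K)}

theorem colon_mul_rename_inl_mul {r : MvPolynomial σ K} (hr : r ∈ Q) (hr₀ : r ≠ 0)
    (f : MvPolynomial (σ ⊕ τ) K) :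
    (Q.map (rename (R := K) Sum.inl) * P.map (rename (R := K) Sum.inr)).colon
        {rename Sum.inl r * f} = (P.map (rename (R := K) Sum.inr)).colon {f} := by
  ext x
  rw [Submodule.mem_colon_singleton, Submodule.mem_colon_singleton, smul_eq_mul, smul_eq_mul,
    mul_left_comm]
  exact ⟨fun h => mem_map_rename_inr_of_rename_inl_mul_mem hr₀ (Ideal.mul_le_right h),
    Ideal.mul_mem_mul (Ideal.mem_map_of_mem _ hr)⟩

theorem colon_eq_of_colon_mul_eq (hQ : Q ≠ ⊥) {f g : MvPolynomial (σ ⊕ τ) K}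
    (h : (Q.map (rename (R := K) Sum.inl) * P.map (rename (R := K) Sum.inr)).colon {f} =
      (P.map (rename (R := K) Sum.inr)).colon {g}) :
    (P.map (rename (R := K) Sum.inr)).colon {f} =
      (P.map (rename (R := K) Sum.inr)).colon {g} := by
  refine le_antisymm (fun x hx => ?_) (h ▸ Submodule.colon_mono Ideal.mul_le_right subset_rfl)
  obtain ⟨r, hr, hr₀⟩ := Submodule.exists_mem_ne_zero_of_ne_bot hQ
  have hrx : rename Sum.inl r * x ∈ (P.map (rename (R := K) Sum.inr)).colon {g} := by
    rw [← h, Submodule.mem_colon_singleton, smul_eq_mul, mul_assoc]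
    exact Ideal.mul_mem_mul (Ideal.mem_map_of_mem _ hr) (Submodule.mem_colon_singleton.1 hx)
  rw [Submodule.mem_colon_singleton, smul_eq_mul, mul_assoc] at hrx
  exact Submodule.mem_colon_singleton.2 (mem_map_rename_inr_of_rename_inl_mul_mem hr₀ hrx)

theorem mem_map_rename_inl_of_le_colon_mul (hP : P ≠ ⊥) {f : MvPolynomial (σ ⊕ τ) K}
    (h : P.map (rename (R := K) Sum.inr) ≤
      (Q.map (rename (R := K) Sum.inl) * P.map (rename (R := K) Sum.inr)).colon {f}) :
    f ∈ Q.map (rename (R := K) (Sum.inl : σ → σ ⊕ τ)) := by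
  obtain ⟨t, ht, ht₀⟩ := Submodule.exists_mem_ne_zero_of_ne_bot hP
  have htf := Submodule.mem_colon_singleton.1 (h (Ideal.mem_map_of_mem _ ht))
  exact mem_map_rename_inl_of_rename_inr_mul_mem ht₀ (Ideal.mul_le_left htf)

theorem exists_isHomogeneous_colon_eq_of_mem_map_rename_inl (hQ : IsGradedIdeal Q)
    {f : MvPolynomial (σ ⊕ τ) K} {d : ℕ} (hfd : f.IsHomogeneous d)
    (hfQ : f ∈ Q.map (rename (R := K) Sum.inl))
    (hf : ((P.map (rename (R := K) Sum.inr)).colon {f}).IsPrime) :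
    ∃ (e : ℕ) (g : MvPolynomial (σ ⊕ τ) K), e + alphaDeg Q ≤ d ∧ g.IsHomogeneous e ∧
      (P.map (rename (R := K) Sum.inr)).colon {g} =
        (P.map (rename (R := K) Sum.inr)).colon {f} := by
  obtain ⟨a, ha⟩ := exists_colon_rename_inr_coeff_eq hf
  have ha₀ : a ∈ (sumAlgEquiv K σ τ f).support := mem_support_iff.2 fun h₀ => by
    rw [h₀, map_zero, Submodule.colon_singleton_zero] at ha
    exact hf.ne_top ha.symm
  obtain ⟨e, hae, he⟩ := exists_isHomogeneous_coeff_sumAlgEquiv hfd ha₀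
  have hQa := hQ.alphaDeg_le_degree hfQ ha₀
  exact ⟨e, _, by omega, he.rename_isHomogeneous, ha⟩

end SumVariables

section VNumber

variable {σ τ K : Type} [Field K] {L p : Ideal (MvPolynomial σ K)}

theorem vnum_le {d : ℕ} {f : MvPolynomial σ K} (hfd : f.IsHomogeneous d)
    (hf : L.colon {f} = p) : vnum L p ≤ d :=
  Nat.sInf_le ⟨f, hfd, by rw [Ideal.colon_span, hf]⟩

theorem exists_isHomogeneous_vnum {d : ℕ} {f : MvPolynomial σ K} (hfd : f.IsHomogeneous d)
    (hf : L.colon {f} = p) :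
    ∃ g : MvPolynomial σ K, g.IsHomogeneous (vnum L p) ∧ L.colon {g} = p := by
  have hne : {d | ∃ g : MvPolynomial σ K, g.IsHomogeneous d ∧
      L.colon (Ideal.span {g}) = p}.Nonempty := ⟨d, f, hfd, by rw [Ideal.colon_span, hf]⟩
  obtain ⟨g, hgd, hg⟩ := Nat.sInf_mem hne
  exact ⟨g, hgd, by rw [← hg, Ideal.colon_span]⟩

theorem vnum_map_renameEquiv (e : σ ≃ τ) (L p : Ideal (MvPolynomial σ K)) :
    vnum (L.map (renameEquiv K e)) (p.map (renameEquiv K e)) = vnum L p := by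
  have hinj : Function.Injective (Ideal.map (renameEquiv K e)) :=
    (Ideal.relIsoOfBijective (renameEquiv K e) (renameEquiv K e).bijective).symm.injective
  refine congrArg sInf (Set.ext fun d => ?_)
  simp only [Ideal.colon_span, Set.mem_ofPred_eq, (renameEquiv K e).surjective.exists,
    colon_map_of_equiv, hinj.eq_iff]
  simp only [renameEquiv_apply, IsHomogeneous.rename_isHomogeneous_iff e.injective]

theorem vnum_map_mul_map_right {Q : Ideal (MvPolynomial σ K)} {P : Ideal (MvPolynomial τ K)}
    (hQ : IsGradedIdeal Q) (hQ₀ : Q ≠ ⊥) (hP : IsGradedIdeal P) (hP₀ : P ≠ ⊥)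
    {f : MvPolynomial (σ ⊕ τ) K}
    (hf : ((P.map (rename (R := K) Sum.inr)).colon {f}).IsPrime) :
    vnum (Q.map (rename (R := K) Sum.inl) * P.map (rename (R := K) Sum.inr))
        ((P.map (rename (R := K) Sum.inr)).colon {f}) =
      vnum (P.map (rename (R := K) Sum.inr)) ((P.map (rename (R := K) Sum.inr)).colon {f}) +
        alphaDeg Q := by
  obtain ⟨d, g, hgd, hg⟩ := (hP.map_rename Sum.inr).exists_isHomogeneous_colon_eq hf
  obtain ⟨g, hgv, hg⟩ := exists_isHomogeneous_vnum hgd hg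
  obtain ⟨r, hr, hr₀, hrd⟩ := hQ.exists_isHomogeneous_alphaDeg hQ₀
  have hrg := (colon_mul_rename_inl_mul (P := P) hr hr₀ g).trans hg
  have hrgd := (hrd.rename_isHomogeneous (f := Sum.inl)).mul hgv
  refine le_antisymm ((vnum_le hrgd hrg).trans_eq (add_comm _ _)) ?_
  obtain ⟨h, hhv, hh⟩ := exists_isHomogeneous_vnum hrgd hrg
  have hhf := colon_eq_of_colon_mul_eq hQ₀ hh
  have hhQ : h ∈ Q.map (rename (R := K) Sum.inl) :=
    mem_map_rename_inl_of_le_colon_mul hP₀ (hh ▸ Ideal.le_colon)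
  obtain ⟨e, u, hle, hue, hu⟩ :=
    exists_isHomogeneous_colon_eq_of_mem_map_rename_inl hQ hhv hhQ (hhf ▸ hf)
  exact (Nat.add_le_add_right (vnum_le hue (hu.trans hhf)) _).trans hle

theorem vnum_map_mul_map_left {Q : Ideal (MvPolynomial σ K)} {P : Ideal (MvPolynomial τ K)}
    (hQ : IsGradedIdeal Q) (hQ₀ : Q ≠ ⊥) (hP : IsGradedIdeal P) (hP₀ : P ≠ ⊥)
    {f : MvPolynomial (σ ⊕ τ) K}
    (hf : ((Q.map (rename (R := K) Sum.inl)).colon {f}).IsPrime) :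
    vnum (Q.map (rename (R := K) Sum.inl) * P.map (rename (R := K) Sum.inr))
        ((Q.map (rename (R := K) Sum.inl)).colon {f}) =
      vnum (Q.map (rename (R := K) Sum.inl)) ((Q.map (rename (R := K) Sum.inl)).colon {f}) +
        alphaDeg P := by
  set e := renameEquiv K (Equiv.sumComm σ τ)
  have hcolon := colon_map_of_equiv e (Q.map (rename (R := K) (Sum.inl : σ → σ ⊕ τ))) f
  rw [map_sumComm_map_rename_inl] at hcolon
  have hprime : ((Q.map (rename (R := K) Sum.inr)).colon {e f}).IsPrime :=
    hcolon ▸ Ideal.map_isPrime_of_equiv e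
  have key := vnum_map_mul_map_right hP hP₀ hQ hQ₀ hprime
  rwa [hcolon, ← map_sumComm_map_rename_inl, ← map_sumComm_map_rename_inr, ← Ideal.map_mul,
    vnum_map_renameEquiv, vnum_map_renameEquiv, mul_comm] at key

end VNumber

theorem exists_colon_eq_of_mem_assOf {A : Type} [CommRing A] [IsNoetherianRing A]
    {L p : Ideal A} (hp : p ∈ assOf L) : ∃ f, L.colon {f} = p := by
  obtain ⟨-, y, hy⟩ := isAssociatedPrime_iff.1 (AssociatedPrimes.mem_iff.1 hp)
  obtain ⟨f, rfl⟩ := Ideal.Quotient.mk_surjective y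
  refine ⟨f, Ideal.ext fun x => ?_⟩
  rw [hy, Submodule.mem_colon_singleton, Submodule.mem_colon_singleton, Submodule.mem_bot,
    ← Ideal.Quotient.eq_zero_iff_mem]
  rfl

-- In a non-Noetherian ring `associatedPrimes` also contains primes that are only radicals of
-- annihilators; with infinitely many variables we restrict to primes of the form `(L : f)`.
theorem stmt1_general {σ τ K : Type} [Field K]
    (I : Ideal (MvPolynomial σ K)) (J : Ideal (MvPolynomial τ K))
    (hI₀ : I ≠ ⊥) (hI : IsGradedIdeal I) (hJ₀ : J ≠ ⊥) (hJ : IsGradedIdeal J)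
    (eI eJ : Ideal (MvPolynomial (σ ⊕ τ) K))
    (heI : eI = Ideal.map (rename Sum.inl) I) (heJ : eJ = Ideal.map (rename Sum.inr) J) (k : ℕ) :
    (∀ p : Ideal (MvPolynomial (σ ⊕ τ) K), p.IsPrime → (∃ f, (eI ^ k).colon {f} = p) →
      vnum ((eI * eJ) ^ k) p = vnum (eI ^ k) p + alphaDeg J * k) ∧
    (∀ q : Ideal (MvPolynomial (σ ⊕ τ) K), q.IsPrime → (∃ f, (eJ ^ k).colon {f} = q) →
      vnum ((eI * eJ) ^ k) q = vnum (eJ ^ k) q + alphaDeg I * k) := by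
  subst heI heJ
  rw [mul_pow, ← Ideal.map_pow, ← Ideal.map_pow, ← hI.alphaDeg_pow hI₀, ← hJ.alphaDeg_pow hJ₀]
  have hIk := pow_ne_zero k hI₀
  have hJk := pow_ne_zero k hJ₀
  constructor
  · rintro _ hp ⟨f, rfl⟩
    exact vnum_map_mul_map_left (hI.pow k) hIk (hJ.pow k) hJk hp
  · rintro _ hq ⟨f, rfl⟩
    exact vnum_map_mul_map_right (hI.pow k) hIk (hJ.pow k) hJk hq

/-- Theorem 2.2: for nonzero proper graded ideals `I ⊂ R`, `J ⊂ T`,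
identified with their extensions to `S`, for every `k ≥ 1`:
(a) for every `p ∈ Ass(I^k)`, `v_p((IJ)^k) = v_p(I^k) + α(J)·k`, and
(b) for every `q ∈ Ass(J^k)`, `v_q((IJ)^k) = v_q(J^k) + α(I)·k`,
where associated primes and v-numbers are computed over `S`. -/
theorem stmt1 {K : Type} [Field K] {n m : ℕ}
    (I : Ideal (MvPolynomial (Fin n) K)) (J : Ideal (MvPolynomial (Fin m) K))
    (hInz : I ≠ ⊥) (hIpr : I ≠ ⊤) (hIgr : IsGradedIdeal I)
    (hJnz : J ≠ ⊥) (hJpr : J ≠ ⊤) (hJgr : IsGradedIdeal J)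
    (eI eJ : Ideal (MvPolynomial (Fin n ⊕ Fin m) K))
    (heI : eI = Ideal.map (rename Sum.inl) I)
    (heJ : eJ = Ideal.map (rename Sum.inr) J) :
    ∀ k : ℕ, 1 ≤ k →
      (∀ p ∈ assOf (eI ^ k),
        vnum ((eI * eJ) ^ k) p = vnum (eI ^ k) p + alphaDeg J * k) ∧
      (∀ q ∈ assOf (eJ ^ k),
        vnum ((eI * eJ) ^ k) q = vnum (eJ ^ k) q + alphaDeg I * k) := by
  intro k _
  obtain ⟨hI, hJ⟩ := stmt1_general I J hInz hIgr hJnz hJgr eI eJ heI heJ k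
  exact ⟨fun p hp => hI p hp.isPrime (exists_colon_eq_of_mem_assOf hp),
    fun q hq => hJ q hq.isPrime (exists_colon_eq_of_mem_assOf hq)⟩
end
end

section
/- Let I ⊂ R and J ⊂ T be nonzero proper monomial ideals, identified with their extensions to S = R ⊗_K T, let k ≥ 1, and let p ⊂ R and q ⊂ T be nonzero monomial prime ideals such that p + q ∈ Ass((I+J)^k) (computed in S). Then v_{p+q}((I+J)^k) = min{ v_p(I^{k−ℓ}) + v_q(J^{ℓ+1}) : 0 ≤ ℓ < k, p ∈ Ass(I^{k−ℓ}), q ∈ Ass(J^{ℓ+1}) }, where v_p(I^{k−ℓ}) is computed in R, v_q(J^{ℓ+1}) is computed in T, and v_{p+q}((I+J)^k) is computed in S. -/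
open MvPolynomial

noncomputable section

/-!
For a monomial ideal `L` and a monomial prime `p` with `(L : f) = p`, some monomial `x^a` of `f`
already satisfies `(L : x^a) = p`; so `v_p(L)` is the least degree of such a monomial. Since
`(I + J)^k = ∑ I^i J^j` over `i + j = k`, a monomial `x^u y^v` lies in it iff `x^u ∈ I^i` and
`y^v ∈ J^j` for some such `i, j`.

If `x^u y^v` has colon ideal `p + q` and `ℓ` is the largest exponent for which `y^v` lies in `J^ℓ`
after inverting the variables outside `q`, then `(I^{k-ℓ} : x^u) = p` and `(J^{ℓ+1} : y^v) = q`.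
Conversely, `(I^{k-ℓ} : x^u) = p` puts `x_i x^u` in `I^{k-ℓ}` for some `i`, hence `x^u` in
`I^{k-ℓ-1}`; likewise `y^v ∈ J^ℓ`, and therefore `((I + J)^k : x^u y^v) = p + q`.
-/

section AssociatedPrimes

theorem exists_notMem_le_colon_of_fg {R : Type*} [CommSemiring R] {p I J : Ideal R}
    (hp : p.IsPrime) (hI : I.FG) (h : ∀ y ∈ I, ∃ s ∉ p, s * y ∈ J) :
    ∃ s ∉ p, I ≤ J.colon {s} := by
  classical
  choose! r hr_notMem hr_mul_mem using h
  obtain ⟨t, rfl⟩ := hI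
  have subset_span (y) (hy : y ∈ t) : y ∈ Ideal.span (t : Set R) := Ideal.subset_span hy
  refine ⟨∏ y ∈ t, r y, ?_, Ideal.span_le.mpr fun y hy => ?_⟩
  · rw [hp.prod_mem_iff]
    rintro ⟨y, hy, hry⟩
    exact hr_notMem y (subset_span y hy) hry
  · refine Submodule.mem_colon_singleton.mpr (J.mem_of_dvd ?_ (hr_mul_mem y (subset_span y hy)))
    rw [smul_eq_mul, mul_comm]
    exact mul_dvd_mul_left y (Finset.dvd_prod_of_mem r hy)

theorem exists_eq_colon_of_isAssociatedPrime_of_fg {R M : Type*} [CommSemiring R]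
    [AddCommMonoid M] [Module R M] {N : Submodule R M} {p : Ideal R}
    (h : N.IsAssociatedPrime p) (hp : p.FG) : ∃ x, p = N.colon {x} := by
  obtain ⟨hprime, x, hx⟩ := h
  have colon_le : N.colon {x} ≤ p := hx ▸ Ideal.le_radical
  -- Localizing at `p`, a power of `p` kills the image of `x`; take the least such power.
  have not_pow_zero_le : ¬∃ s ∉ p, p ^ 0 ≤ (N.colon {x}).colon {s} := by
    rintro ⟨s, hs, hle⟩
    exact hs (colon_le (by simpa using hle (by simp : (1 : R) ∈ p ^ 0)))
  have exists_pow_le : ∃ n, ∃ s ∉ p, p ^ n ≤ (N.colon {x}).colon {s} := by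
    obtain ⟨n, hn⟩ := (N.colon {x}).exists_radical_pow_le_of_fg (hx ▸ hp)
    exact ⟨n, 1, p.one_notMem, (hx ▸ hn).trans Ideal.le_colon⟩
  obtain ⟨n, hn, s, hs, hsucc⟩ :=
    Nat.exists_not_and_succ_of_not_zero_of_exists not_pow_zero_le exists_pow_le
  obtain ⟨y, hy, hy_mul⟩ : ∃ y ∈ p ^ n, ∀ r ∉ p, r * y ∉ N.colon {x} := by
    by_contra! hcon
    exact hn (exists_notMem_le_colon_of_fg hprime hp.pow hcon)
  refine ⟨(s * y) • x, le_antisymm (fun r hr => ?_) (fun r hr => ?_)⟩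
  · have hry : r * y ∈ p ^ (n + 1) := pow_succ' p n ▸ Ideal.mul_mem_mul hr hy
    have hrys := Submodule.mem_colon_singleton.mp (hsucc hry)
    rw [Submodule.mem_colon_singleton, smul_smul, ← Submodule.mem_colon_singleton]
    rwa [smul_eq_mul, mul_assoc, mul_comm y s] at hrys
  · rw [Submodule.mem_colon_singleton, smul_smul, ← Submodule.mem_colon_singleton,
      ← mul_assoc] at hr
    by_contra hrp
    exact hy_mul (r * s) (hprime.mul_notMem hrp hs) hr

theorem mem_assOf_iff_of_fg {R : Type} [CommRing R] {L p : Ideal R} (hp : p.FG) :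
    p ∈ assOf L ↔ p.IsPrime ∧ ∃ f, L.colon {f} = p := by
  have colon_mk (f : R) : (⊥ : Submodule R (R ⧸ L)).colon {Ideal.Quotient.mk L f} =
      L.colon {f} := by
    ext r
    rw [Submodule.mem_colon_singleton, Submodule.mem_colon_singleton, Submodule.mem_bot,
      smul_eq_mul, ← Ideal.Quotient.eq_zero_iff_mem, map_mul]
    rfl
  constructor
  · intro h
    obtain ⟨x, hx⟩ := exists_eq_colon_of_isAssociatedPrime_of_fg h hp
    obtain ⟨f, rfl⟩ := Ideal.Quotient.mk_surjective x
    exact ⟨h.isPrime, f, (colon_mk f).symm.trans hx.symm⟩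
  · rintro ⟨hprime, f, hf⟩
    exact ⟨hprime, Ideal.Quotient.mk L f, by rw [colon_mk, hf, hprime.radical]⟩

end AssociatedPrimes

section Monomials

variable {σ τ R : Type*} [CommSemiring R]

theorem monomial_add_mem_mul {L M : Ideal (MvPolynomial σ R)} {a b : σ →₀ ℕ}
    (ha : monomial a (1 : R) ∈ L) (hb : monomial b (1 : R) ∈ M) :
    monomial (a + b) (1 : R) ∈ L * M := by
  simpa only [monomial_mul, one_mul] using Ideal.mul_mem_mul ha hb

theorem monomial_mem_of_le {L : Ideal (MvPolynomial σ R)} {a b : σ →₀ ℕ}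
    (ha : monomial a (1 : R) ∈ L) (hab : a ≤ b) : monomial b (1 : R) ∈ L :=
  L.mem_of_dvd (monomial_dvd_monomial.mpr ⟨Or.inr hab, dvd_rfl⟩) ha

theorem monomial_mem_span_monomial_iff [Nontrivial R] {G : Set (σ →₀ ℕ)} {a : σ →₀ ℕ} :
    monomial a (1 : R) ∈ Ideal.span ((fun g => monomial g (1 : R)) '' G) ↔ ∃ g ∈ G, g ≤ a := by
  classical
  simp [mem_ideal_span_monomial_image, support_monomial]

theorem monomial_mem_span_X_iff [Nontrivial R] {A : Set σ} {b : σ →₀ ℕ} :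
    monomial b (1 : R) ∈ Ideal.span (X '' A) ↔ ∃ i ∈ A, b i ≠ 0 := by
  classical
  simp [mem_ideal_span_X_image, support_monomial]

theorem span_monomial_mul_span_monomial (G H : Set (σ →₀ ℕ)) :
    Ideal.span ((fun a => monomial a (1 : R)) '' G) *
        Ideal.span ((fun a => monomial a (1 : R)) '' H) =
      Ideal.span ((fun a => monomial a (1 : R)) '' Set.image2 (· + ·) G H) := by
  simp only [Ideal.span_mul_span', ← Set.image2_mul, Set.image2_image_left,
    Set.image2_image_right, Set.image_image2, monomial_mul, one_mul]

theorem map_rename_span_monomial (φ : σ → τ) (G : Set (σ →₀ ℕ)) :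
    Ideal.map (rename φ) (Ideal.span ((fun a => monomial a (1 : R)) '' G)) =
      Ideal.span ((fun a => monomial a (1 : R)) '' (Finsupp.mapDomain φ '' G)) := by
  simp only [Ideal.map_span, Set.image_image, rename_monomial]

theorem isPrime_span_X_image {D : Type*} [CommRing D] [IsDomain D] (A : Set σ) :
    (Ideal.span (X '' A : Set (MvPolynomial σ D))).IsPrime := by
  classical
  set P : Ideal (MvPolynomial σ D) := Ideal.span (X '' A)
  let φ : MvPolynomial σ D →ₐ[D] MvPolynomial σ D := aeval fun i => if i ∈ A then 0 else X i
  have mk_comp_φ : (Ideal.Quotient.mkₐ D P).comp φ = Ideal.Quotient.mkₐ D P := by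
    ext i
    by_cases hi : i ∈ A
    · have hX : (X i : MvPolynomial σ D) ∈ P := Ideal.subset_span ⟨i, hi, rfl⟩
      simp [φ, hi, Ideal.Quotient.eq_zero_iff_mem.mpr hX]
    · simp [φ, hi]
  have ker_φ : RingHom.ker φ = P := by
    refine le_antisymm (fun f hf => ?_) (Ideal.span_le.mpr ?_)
    · have := DFunLike.congr_fun mk_comp_φ f
      rw [AlgHom.comp_apply, RingHom.mem_ker.mp hf, map_zero] at this
      exact Ideal.Quotient.eq_zero_iff_mem.mp this.symm
    · rintro _ ⟨i, hi, rfl⟩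
      simp [φ, hi]
  exact ker_φ ▸ RingHom.ker_isPrime φ

theorem mapDomain_le_iff_le_comapDomain {φ : σ → τ} (hφ : Function.Injective φ) {g : σ →₀ ℕ}
    {a : τ →₀ ℕ} : g.mapDomain φ ≤ a ↔ g ≤ a.comapDomain φ hφ.injOn := by
  constructor
  · intro h i
    simpa only [Finsupp.comapDomain_apply, Finsupp.mapDomain_apply hφ] using h (φ i)
  · intro h j
    by_cases hj : j ∈ Set.range φ
    · obtain ⟨i, rfl⟩ := hj
      simpa only [Finsupp.comapDomain_apply, Finsupp.mapDomain_apply hφ] using h i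
    · simp only [Finsupp.mapDomain_of_notMem_range _ _ hj, zero_le]

end Monomials

namespace IsMonomialIdeal

variable {σ τ K : Type} [Field K] {L M : Ideal (MvPolynomial σ K)}

theorem mem_iff (hL : IsMonomialIdeal L) {f : MvPolynomial σ K} :
    f ∈ L ↔ ∀ a ∈ f.support, monomial a (1 : K) ∈ L := by
  obtain ⟨G, rfl⟩ := hL
  rw [mem_ideal_span_monomial_image]
  simp only [monomial_mem_span_monomial_iff]

theorem of_support (h : ∀ f ∈ L, ∀ a ∈ f.support, monomial a (1 : K) ∈ L) :
    IsMonomialIdeal L := by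
  refine ⟨{a | monomial a (1 : K) ∈ L}, le_antisymm (fun f hf => ?_) (Ideal.span_le.mpr ?_)⟩
  · exact mem_ideal_span_monomial_image.mpr fun a ha => ⟨a, h f hf a ha, le_rfl⟩
  · rintro _ ⟨a, ha, rfl⟩
    exact ha

theorem eq_iff (hL : IsMonomialIdeal L) (hM : IsMonomialIdeal M) :
    L = M ↔ ∀ a, monomial a (1 : K) ∈ L ↔ monomial a (1 : K) ∈ M := by
  refine ⟨fun h _ => h ▸ Iff.rfl, fun h => ?_⟩
  ext f
  rw [hL.mem_iff, hM.mem_iff]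
  simp only [h]

theorem span_X_image (A : Set σ) :
    IsMonomialIdeal (Ideal.span (X '' A) : Ideal (MvPolynomial σ K)) :=
  ⟨(fun i => Finsupp.single i 1) '' A, by rw [Set.image_image]; rfl⟩

theorem add (hL : IsMonomialIdeal L) (hM : IsMonomialIdeal M) : IsMonomialIdeal (L + M) := by
  obtain ⟨G, rfl⟩ := hL
  obtain ⟨H, rfl⟩ := hM
  exact ⟨G ∪ H, by rw [Set.image_union, Ideal.span_union, Submodule.add_eq_sup]⟩

theorem mul (hL : IsMonomialIdeal L) (hM : IsMonomialIdeal M) : IsMonomialIdeal (L * M) := by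
  obtain ⟨G, rfl⟩ := hL
  obtain ⟨H, rfl⟩ := hM
  exact ⟨_, span_monomial_mul_span_monomial G H⟩

theorem pow (hL : IsMonomialIdeal L) (k : ℕ) : IsMonomialIdeal (L ^ k) := by
  induction k with
  | zero => exact ⟨{0}, by simp [Ideal.one_eq_top]⟩
  | succ k ih => exact pow_succ L k ▸ ih.mul hL

theorem map_rename (hL : IsMonomialIdeal L) (φ : σ → τ) :
    IsMonomialIdeal (Ideal.map (rename φ) L) := by
  obtain ⟨G, rfl⟩ := hL
  exact ⟨_, map_rename_span_monomial φ G⟩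

theorem colon_monomial (hL : IsMonomialIdeal L) (a : σ →₀ ℕ) :
    IsMonomialIdeal (L.colon {monomial a (1 : K)}) := by
  refine of_support fun f hf b hb => ?_
  rw [Submodule.mem_colon_singleton, smul_eq_mul] at hf ⊢
  rw [monomial_mul, one_mul]
  refine hL.mem_iff.mp hf (b + a) ?_
  simpa only [mem_support_iff, coeff_mul_monomial, mul_one] using hb

theorem monomial_mem_mul_iff (hL : IsMonomialIdeal L) (hM : IsMonomialIdeal M) {a : σ →₀ ℕ} :
    monomial a (1 : K) ∈ L * M ↔
      ∃ b c, b + c = a ∧ monomial b (1 : K) ∈ L ∧ monomial c (1 : K) ∈ M := by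
  constructor
  · obtain ⟨G, rfl⟩ := hL
    obtain ⟨H, rfl⟩ := hM
    rw [span_monomial_mul_span_monomial, monomial_mem_span_monomial_iff]
    rintro ⟨_, ⟨g, hg, h, hh, rfl⟩, hle⟩
    obtain ⟨r, rfl⟩ := le_iff_exists_add.mp hle
    exact ⟨g, h + r, (add_assoc g h r).symm, monomial_mem_span_monomial_iff.mpr ⟨g, hg, le_rfl⟩,
      monomial_mem_span_monomial_iff.mpr ⟨h, hh, le_self_add⟩⟩
  · rintro ⟨b, c, rfl, hb, hc⟩
    exact monomial_add_mem_mul hb hc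

theorem monomial_mem_sum_iff {ι : Type*} {s : Finset ι} {L : ι → Ideal (MvPolynomial σ K)}
    (hL : ∀ i, IsMonomialIdeal (L i)) {a : σ →₀ ℕ} :
    monomial a (1 : K) ∈ ∑ i ∈ s, L i ↔ ∃ i ∈ s, monomial a (1 : K) ∈ L i := by
  classical
  constructor
  · intro h
    rw [Ideal.sum_eq_sup, Finset.sup_eq_iSup, Submodule.mem_iSup_finset_iff_exists_sum] at h
    obtain ⟨f, hf⟩ := h
    have hcoeff : ∑ i ∈ s, coeff a (f i : MvPolynomial σ K) ≠ 0 := by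
      rw [← coeff_sum, hf, coeff_monomial, if_pos rfl]
      exact one_ne_zero
    obtain ⟨i, hi, hne⟩ := Finset.exists_ne_zero_of_sum_ne_zero hcoeff
    exact ⟨i, hi, (hL i).mem_iff.mp (f i).2 a (mem_support_iff.mpr hne)⟩
  · rintro ⟨i, hi, ha⟩
    exact Finset.single_le_sum_of_canonicallyOrdered (f := L) hi ha

theorem monomial_mem_map_rename_iff (hL : IsMonomialIdeal L) {φ : σ → τ}
    (hφ : Function.Injective φ) {a : τ →₀ ℕ} :
    monomial a (1 : K) ∈ Ideal.map (rename φ) L ↔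
      monomial (a.comapDomain φ hφ.injOn) (1 : K) ∈ L := by
  obtain ⟨G, rfl⟩ := hL
  simp only [map_rename_span_monomial, monomial_mem_span_monomial_iff, Set.exists_mem_image,
    mapDomain_le_iff_le_comapDomain hφ]

theorem monomial_mem_pow_of_add_single_mem_pow_succ (hL : IsMonomialIdeal L) {i : σ} {k : ℕ}
    {a : σ →₀ ℕ} (h : monomial (a + Finsupp.single i 1) (1 : K) ∈ L ^ (k + 1)) :
    monomial a (1 : K) ∈ L ^ k := by
  have exists_eq_add_single (b : σ →₀ ℕ) (hb : b i ≠ 0) : ∃ b', b' + Finsupp.single i 1 = b :=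
    ⟨b - Finsupp.single i 1, tsub_add_cancel_of_le (by simpa [Nat.one_le_iff_ne_zero] using hb)⟩
  induction k generalizing a with
  | zero => simp
  | succ k ih =>
    rw [pow_succ, (hL.pow _).monomial_mem_mul_iff hL] at h
    obtain ⟨b, c, hbc, hb, hc⟩ := h
    by_cases hbi : b i = 0
    · have hci : c i ≠ 0 := by
        have hsum : b i + c i = a i + 1 := by
          simpa only [Finsupp.add_apply, Finsupp.single_eq_same] using DFunLike.congr_fun hbc i
        omega
      obtain ⟨c', rfl⟩ := exists_eq_add_single c hci
      obtain rfl : b + c' = a := add_right_cancel ((add_assoc _ _ _).trans hbc)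
      exact monomial_mem_of_le hb le_self_add
    · obtain ⟨b', rfl⟩ := exists_eq_add_single b hbi
      obtain rfl : b' + c = a := add_right_cancel ((add_right_comm _ _ _).trans hbc)
      exact pow_succ L k ▸ monomial_add_mem_mul (ih hb) hc

end IsMonomialIdeal

section ColonExponents

variable {σ K : Type} [Field K] {L : Ideal (MvPolynomial σ K)} {A : Set σ}

/-- The exponents `a` of the monomials witnessing that the monomial prime `(x_i : i ∈ A)` is
associated to `L`, i.e. those with `(L : x^a) = (x_i : i ∈ A)`. -/
def colonExponents (L : Ideal (MvPolynomial σ K)) (A : Set σ) : Set (σ →₀ ℕ) :=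
  {a | L.colon {monomial a (1 : K)} = Ideal.span (X '' A)}

theorem mem_colonExponents_iff (hL : IsMonomialIdeal L) {a : σ →₀ ℕ} :
    a ∈ colonExponents L A ↔ ∀ b, monomial (a + b) (1 : K) ∈ L ↔ ∃ i ∈ A, b i ≠ 0 := by
  simp only [colonExponents, Set.mem_ofPred_eq,
    (hL.colon_monomial a).eq_iff (.span_X_image A), Submodule.mem_colon_singleton, smul_eq_mul,
    monomial_mul, one_mul, monomial_mem_span_X_iff, add_comm]

theorem span_X_le_colon_monomial (hL : IsMonomialIdeal L) {f : MvPolynomial σ K}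
    (hf : Ideal.span (X '' A) ≤ L.colon {f}) {a : σ →₀ ℕ} (ha : a ∈ f.support) :
    Ideal.span (X '' A) ≤ L.colon {monomial a (1 : K)} := by
  refine Ideal.span_le.mpr ?_
  rintro _ ⟨i, hi, rfl⟩
  have hXf : X i * f ∈ L := Submodule.mem_colon_singleton.mp (hf (Ideal.subset_span ⟨i, hi, rfl⟩))
  refine Submodule.mem_colon_singleton.mpr ?_
  rw [smul_eq_mul, X, monomial_mul, one_mul]
  refine hL.mem_iff.mp hXf _ ?_
  simpa only [mem_support_iff, coeff_X_mul] using ha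

theorem inf_colon_monomial_le_colon (L : Ideal (MvPolynomial σ K)) (f : MvPolynomial σ K) :
    f.support.inf (fun a => L.colon {monomial a (1 : K)}) ≤ L.colon {f} := by
  intro g hg
  rw [Submodule.mem_finsetInf] at hg
  rw [Submodule.mem_colon_singleton, smul_eq_mul, f.as_sum, Finset.mul_sum]
  refine L.sum_mem fun a ha => ?_
  have hga : g * monomial a 1 ∈ L := Submodule.mem_colon_singleton.mp (hg a ha)
  rw [← mul_one (coeff a f), ← C_mul_monomial, mul_left_comm]
  exact L.mul_mem_left _ hga

theorem exists_mem_colonExponents_of_colon_eq (hL : IsMonomialIdeal L) {f : MvPolynomial σ K}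
    (hf : L.colon {f} = Ideal.span (X '' A)) : ∃ a ∈ f.support, a ∈ colonExponents L A := by
  obtain ⟨a, ha, hle⟩ := (isPrime_span_X_image A).inf_le'.mp
    ((inf_colon_monomial_le_colon L f).trans_eq hf)
  exact ⟨a, ha, hle.antisymm (span_X_le_colon_monomial hL hf.ge ha)⟩

theorem span_X_mem_assOf_iff (hL : IsMonomialIdeal L) (hA : A.Finite) :
    Ideal.span (X '' A) ∈ assOf L ↔ (colonExponents L A).Nonempty := by
  rw [mem_assOf_iff_of_fg (Submodule.fg_span (hA.image X))]
  constructor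
  · rintro ⟨-, f, hf⟩
    obtain ⟨a, -, ha⟩ := exists_mem_colonExponents_of_colon_eq hL hf
    exact ⟨a, ha⟩
  · rintro ⟨a, ha⟩
    exact ⟨isPrime_span_X_image A, _, ha⟩

theorem vnum_eq_sInf_degree (hL : IsMonomialIdeal L) (A : Set σ) :
    vnum L (Ideal.span (X '' A)) = sInf (Finsupp.degree '' colonExponents L A) := by
  simp only [vnum, Ideal.colon_span]
  congr 1
  ext d
  constructor
  · rintro ⟨f, hfd, hf⟩
    obtain ⟨a, haf, ha⟩ := exists_mem_colonExponents_of_colon_eq hL hf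
    refine ⟨a, ha, ?_⟩
    by_contra hne
    exact mem_support_iff.mp haf (hfd.coeff_eq_zero hne)
  · rintro ⟨a, ha, rfl⟩
    exact ⟨monomial a 1, isHomogeneous_monomial _ rfl, ha⟩

theorem vnum_le_degree (hL : IsMonomialIdeal L) {a : σ →₀ ℕ} (ha : a ∈ colonExponents L A) :
    vnum L (Ideal.span (X '' A)) ≤ a.degree :=
  (vnum_eq_sInf_degree hL A).trans_le (Nat.sInf_le ⟨a, ha, rfl⟩)

theorem exists_degree_eq_vnum (hL : IsMonomialIdeal L) (h : (colonExponents L A).Nonempty) :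
    ∃ a ∈ colonExponents L A, a.degree = vnum L (Ideal.span (X '' A)) :=
  vnum_eq_sInf_degree hL A ▸ Nat.sInf_mem (h.image Finsupp.degree)

theorem monomial_mem_pow_of_mem_colonExponents_pow_succ {k : ℕ} (hL : IsMonomialIdeal L)
    (hA : A.Nonempty) {a : σ →₀ ℕ} (ha : a ∈ colonExponents (L ^ (k + 1)) A) :
    monomial a (1 : K) ∈ L ^ k := by
  obtain ⟨i, hi⟩ := hA
  refine hL.monomial_mem_pow_of_add_single_mem_pow_succ (i := i) ?_
  exact ((mem_colonExponents_iff (hL.pow _)).mp ha _).mpr ⟨i, hi, by simp⟩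

end ColonExponents

section SumOfExtensions

theorem add_pow_eq_sum_antidiagonal {α : Type*} [IdemCommSemiring α] (a b : α) (n : ℕ) :
    (a + b) ^ n = ∑ ij ∈ Finset.HasAntidiagonal.antidiagonal n, a ^ ij.1 * b ^ ij.2 := by
  rw [(Commute.all a b).add_pow']
  refine Finset.sum_congr rfl fun ij hij => nsmul_eq_self ?_ _
  exact (Nat.choose_pos ((Finset.HasAntidiagonal.mem_antidiagonal.mp hij) ▸ le_self_add)).ne'

theorem exists_eq_sumElim {α β M : Type*} [Zero M] (w : α ⊕ β →₀ M) :
    ∃ (u : α →₀ M) (v : β →₀ M), w = u.sumElim v :=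
  ⟨_, _, (Finsupp.comapDomain_sumElim_comapDomain w).symm⟩

theorem degree_sumElim_s7 {α β M : Type*} [AddCommMonoid M] (u : α →₀ M) (v : β →₀ M) :
    (u.sumElim v).degree = u.degree + v.degree := by
  rw [Finsupp.sumElim_eq_add, map_add, Finsupp.degree_mapDomain, Finsupp.degree_mapDomain]

variable {σ τ K : Type} [Field K] {I : Ideal (MvPolynomial σ K)} {J : Ideal (MvPolynomial τ K)}
  {A : Set σ} {B : Set τ} {u : σ →₀ ℕ} {v : τ →₀ ℕ} {k : ℕ}

/-- The ideal written `I + J` in the literature: the sum, in the polynomial ring on the disjoint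
union of the variables, of the extensions of `I` and `J`. -/
def extensionSum (I : Ideal (MvPolynomial σ K)) (J : Ideal (MvPolynomial τ K)) :
    Ideal (MvPolynomial (σ ⊕ τ) K) :=
  Ideal.map (rename Sum.inl) I + Ideal.map (rename Sum.inr) J

theorem IsMonomialIdeal.extensionSum (hI : IsMonomialIdeal I) (hJ : IsMonomialIdeal J) :
    IsMonomialIdeal (extensionSum I J) :=
  (hI.map_rename _).add (hJ.map_rename _)

theorem extensionSum_span_X (A : Set σ) (B : Set τ) :
    extensionSum (Ideal.span (X '' A)) (Ideal.span (X '' B)) =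
      (Ideal.span (X '' (Sum.inl '' A ∪ Sum.inr '' B)) : Ideal (MvPolynomial (σ ⊕ τ) K)) := by
  simp only [extensionSum, Ideal.map_span, Set.image_union, Ideal.span_union,
    Submodule.add_eq_sup, Set.image_image, rename_X]

theorem monomial_sumElim_mem_map_mul_map_iff (hI : IsMonomialIdeal I) (hJ : IsMonomialIdeal J) :
    monomial (u.sumElim v) (1 : K) ∈
        Ideal.map (rename Sum.inl) I * Ideal.map (rename Sum.inr) J ↔
      monomial u (1 : K) ∈ I ∧ monomial v (1 : K) ∈ J := by
  have hu : monomial (u.sumElim v) (1 : K) ∈ Ideal.map (rename Sum.inl) I ↔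
      monomial u (1 : K) ∈ I := by
    rw [hI.monomial_mem_map_rename_iff Sum.inl_injective, Finsupp.comapDomain_inl_sumElim]
  have hv : monomial (u.sumElim v) (1 : K) ∈ Ideal.map (rename Sum.inr) J ↔
      monomial v (1 : K) ∈ J := by
    rw [hJ.monomial_mem_map_rename_iff Sum.inr_injective, Finsupp.comapDomain_inr_sumElim]
  refine ⟨fun h => ⟨hu.mp (Ideal.mul_le_left h), hv.mp (Ideal.mul_le_right h)⟩, fun h => ?_⟩
  rw [Finsupp.sumElim_eq_add]
  apply monomial_add_mem_mul
  · simpa only [rename_monomial] using Ideal.mem_map_of_mem (rename Sum.inl) h.1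
  · simpa only [rename_monomial] using Ideal.mem_map_of_mem (rename Sum.inr) h.2

theorem monomial_sumElim_mem_extensionSum_pow_iff (hI : IsMonomialIdeal I)
    (hJ : IsMonomialIdeal J) :
    monomial (u.sumElim v) (1 : K) ∈ extensionSum I J ^ k ↔
      ∃ i j, i + j = k ∧ monomial u (1 : K) ∈ I ^ i ∧ monomial v (1 : K) ∈ J ^ j := by
  simp only [extensionSum, add_pow_eq_sum_antidiagonal, ← Ideal.map_pow]
  rw [IsMonomialIdeal.monomial_mem_sum_iff fun _ =>
    ((hI.pow _).map_rename _).mul ((hJ.pow _).map_rename _)]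
  simp only [monomial_sumElim_mem_map_mul_map_iff (hI.pow _) (hJ.pow _), Prod.exists,
    Finset.HasAntidiagonal.mem_antidiagonal]

theorem sumElim_mem_colonExponents_pow_iff_forall (hI : IsMonomialIdeal I)
    (hJ : IsMonomialIdeal J) :
    u.sumElim v ∈ colonExponents (extensionSum I J ^ k) (Sum.inl '' A ∪ Sum.inr '' B) ↔
      ∀ b c, (∃ i j, i + j = k ∧ monomial (u + b) (1 : K) ∈ I ^ i ∧
        monomial (v + c) (1 : K) ∈ J ^ j) ↔ (∃ i ∈ A, b i ≠ 0) ∨ ∃ j ∈ B, c j ≠ 0 := by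
  have exists_sumElim_ne_zero (b : σ →₀ ℕ) (c : τ →₀ ℕ) :
      (∃ s ∈ Sum.inl '' A ∪ Sum.inr '' B, b.sumElim c s ≠ 0) ↔
        (∃ i ∈ A, b i ≠ 0) ∨ ∃ j ∈ B, c j ≠ 0 := by
    simp [or_and_right, exists_or]
  rw [mem_colonExponents_iff ((hI.extensionSum hJ).pow k)]
  simp only [← monomial_sumElim_mem_extensionSum_pow_iff hI hJ, Finsupp.sumElim_add,
    ← exists_sumElim_ne_zero]
  refine ⟨fun h b c => h _, fun h w => ?_⟩
  obtain ⟨b, c, rfl⟩ := exists_eq_sumElim w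
  exact h b c

theorem sumElim_mem_colonExponents_pow {i j : ℕ} (hI : IsMonomialIdeal I)
    (hJ : IsMonomialIdeal J) (hA : A.Nonempty) (hB : B.Nonempty)
    (hu : u ∈ colonExponents (I ^ (i + 1)) A) (hv : v ∈ colonExponents (J ^ (j + 1)) B) :
    u.sumElim v ∈
      colonExponents (extensionSum I J ^ (i + j + 1)) (Sum.inl '' A ∪ Sum.inr '' B) := by
  have hu_pow := monomial_mem_pow_of_mem_colonExponents_pow_succ hI hA hu
  have hv_pow := monomial_mem_pow_of_mem_colonExponents_pow_succ hJ hB hv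
  rw [mem_colonExponents_iff (hI.pow _)] at hu
  rw [mem_colonExponents_iff (hJ.pow _)] at hv
  rw [sumElim_mem_colonExponents_pow_iff_forall hI hJ]
  intro b c
  constructor
  · rintro ⟨i', j', hij, hi', hj'⟩
    obtain hle | hle : i + 1 ≤ i' ∨ j + 1 ≤ j' := by omega
    · exact Or.inl ((hu b).mp (Ideal.pow_le_pow_right hle hi'))
    · exact Or.inr ((hv c).mp (Ideal.pow_le_pow_right hle hj'))
  · rintro (hb | hc)
    · exact ⟨i + 1, j, by omega, (hu b).mpr hb, monomial_mem_of_le hv_pow le_self_add⟩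
    · exact ⟨i, j + 1, by omega, monomial_mem_of_le hu_pow le_self_add, (hv c).mpr hc⟩

theorem exists_mem_colonExponents_of_sumElim_mem (hI : IsMonomialIdeal I)
    (hJ : IsMonomialIdeal J)
    (h : u.sumElim v ∈ colonExponents (extensionSum I J ^ k) (Sum.inl '' A ∪ Sum.inr '' B)) :
    ∃ ℓ < k, u ∈ colonExponents (I ^ (k - ℓ)) A ∧ v ∈ colonExponents (J ^ (ℓ + 1)) B := by
  rw [sumElim_mem_colonExponents_pow_iff_forall hI hJ] at h
  -- `V t` says that `y^v ∈ J^t` after inverting the variables outside `B`.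
  let V (t : ℕ) : Prop := ∃ c : τ →₀ ℕ, (¬∃ j ∈ B, c j ≠ 0) ∧ monomial (v + c) (1 : K) ∈ J ^ t
  have V_anti {s t : ℕ} (hst : s ≤ t) : V t → V s := fun ⟨c, hc, hmem⟩ =>
    ⟨c, hc, Ideal.pow_le_pow_right hst hmem⟩
  have V_zero : V 0 := ⟨0, by simp, by simp⟩
  have not_V_k : ¬V k := fun ⟨c, hc, hmem⟩ =>
    hc (((h 0 c).mp ⟨0, k, zero_add k, by simp, hmem⟩).resolve_left (by simp))
  obtain ⟨ℓ, hℓ, not_V_succ⟩ := Nat.exists_not_and_succ_of_not_zero_of_exists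
    (p := fun t => ¬V t) (not_not.mpr V_zero) ⟨k, not_V_k⟩
  obtain ⟨c₀, hc₀, hc₀_mem⟩ : V ℓ := not_not.mp hℓ
  have hℓk : ℓ < k := lt_of_not_ge fun hle => not_V_k (V_anti hle ⟨c₀, hc₀, hc₀_mem⟩)
  have of_mem_I (b : σ →₀ ℕ) (hb : monomial (u + b) (1 : K) ∈ I ^ (k - ℓ)) : ∃ i ∈ A, b i ≠ 0 :=
    ((h b c₀).mp ⟨k - ℓ, ℓ, by omega, hb, hc₀_mem⟩).resolve_right hc₀
  refine ⟨ℓ, hℓk, (mem_colonExponents_iff (hI.pow _)).mpr fun b => ⟨of_mem_I b, fun hb => ?_⟩,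
    (mem_colonExponents_iff (hJ.pow _)).mpr fun c => ⟨fun hc => ?_, fun hc => ?_⟩⟩
  · obtain ⟨i, j, hij, hi, hj⟩ := (h b 0).mpr (Or.inl hb)
    have hjℓ : j < ℓ + 1 := lt_of_not_ge fun hle =>
      not_V_succ (V_anti hle ⟨0, by simp, hj⟩)
    exact Ideal.pow_le_pow_right (by omega) hi
  · by_contra hcB
    exact not_V_succ ⟨c, hcB, hc⟩
  · obtain ⟨i, j, hij, hi, hj⟩ := (h 0 c).mpr (Or.inr hc)
    have hik : i < k - ℓ := lt_of_not_ge fun hle => by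
      simpa using of_mem_I 0 (Ideal.pow_le_pow_right hle hi)
    exact Ideal.pow_le_pow_right (by omega) hj

theorem vnum_extensionSum_pow_le {ℓ : ℕ} (hI : IsMonomialIdeal I) (hJ : IsMonomialIdeal J)
    (hA : A.Nonempty) (hB : B.Nonempty) (hℓ : ℓ < k)
    (hu : (colonExponents (I ^ (k - ℓ)) A).Nonempty)
    (hv : (colonExponents (J ^ (ℓ + 1)) B).Nonempty) :
    vnum (extensionSum I J ^ k) (extensionSum (Ideal.span (X '' A)) (Ideal.span (X '' B))) ≤
      vnum (I ^ (k - ℓ)) (Ideal.span (X '' A)) + vnum (J ^ (ℓ + 1)) (Ideal.span (X '' B)) := by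
  obtain ⟨i, hi⟩ : ∃ i, k - ℓ = i + 1 := Nat.exists_eq_add_one.mpr (by omega)
  obtain rfl : k = i + ℓ + 1 := by omega
  rw [hi] at hu ⊢
  obtain ⟨u, hu, hu_deg⟩ := exists_degree_eq_vnum (hI.pow _) hu
  obtain ⟨v, hv, hv_deg⟩ := exists_degree_eq_vnum (hJ.pow _) hv
  rw [← hu_deg, ← hv_deg, ← degree_sumElim_s7, extensionSum_span_X]
  exact vnum_le_degree ((hI.extensionSum hJ).pow _)
    (sumElim_mem_colonExponents_pow hI hJ hA hB hu hv)

theorem exists_vnum_add_vnum_le (hI : IsMonomialIdeal I) (hJ : IsMonomialIdeal J)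
    (h : (colonExponents (extensionSum I J ^ k) (Sum.inl '' A ∪ Sum.inr '' B)).Nonempty) :
    ∃ ℓ < k, (colonExponents (I ^ (k - ℓ)) A).Nonempty ∧
      (colonExponents (J ^ (ℓ + 1)) B).Nonempty ∧
      vnum (I ^ (k - ℓ)) (Ideal.span (X '' A)) + vnum (J ^ (ℓ + 1)) (Ideal.span (X '' B)) ≤
        vnum (extensionSum I J ^ k)
          (extensionSum (Ideal.span (X '' A)) (Ideal.span (X '' B))) := by
  obtain ⟨w, hw, hw_deg⟩ := exists_degree_eq_vnum ((hI.extensionSum hJ).pow k) h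
  obtain ⟨u, v, rfl⟩ := exists_eq_sumElim w
  obtain ⟨ℓ, hℓ, hu, hv⟩ := exists_mem_colonExponents_of_sumElim_mem hI hJ hw
  refine ⟨ℓ, hℓ, ⟨u, hu⟩, ⟨v, hv⟩, ?_⟩
  rw [extensionSum_span_X, ← hw_deg, degree_sumElim_s7]
  exact add_le_add (vnum_le_degree (hI.pow _) hu) (vnum_le_degree (hJ.pow _) hv)

end SumOfExtensions

theorem stmt7_general {σ τ K : Type} [Field K] {I : Ideal (MvPolynomial σ K)}
    {J : Ideal (MvPolynomial τ K)} (hI : IsMonomialIdeal I) (hJ : IsMonomialIdeal J) (k : ℕ)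
    {A : Set σ} (hA_fin : A.Finite) (hA : A.Nonempty)
    {B : Set τ} (hB_fin : B.Finite) (hB : B.Nonempty)
    (hassoc : extensionSum (Ideal.span (X '' A)) (Ideal.span (X '' B)) ∈
      assOf (extensionSum I J ^ k)) :
    vnum (extensionSum I J ^ k) (extensionSum (Ideal.span (X '' A)) (Ideal.span (X '' B))) =
      sInf {d : ℕ | ∃ ℓ < k, Ideal.span (X '' A) ∈ assOf (I ^ (k - ℓ)) ∧
        Ideal.span (X '' B) ∈ assOf (J ^ (ℓ + 1)) ∧
        d = vnum (I ^ (k - ℓ)) (Ideal.span (X '' A)) +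
          vnum (J ^ (ℓ + 1)) (Ideal.span (X '' B))} := by
  simp only [span_X_mem_assOf_iff (hI.pow _) hA_fin, span_X_mem_assOf_iff (hJ.pow _) hB_fin]
  rw [extensionSum_span_X, span_X_mem_assOf_iff ((hI.extensionSum hJ).pow k)
    ((hA_fin.image _).union (hB_fin.image _))] at hassoc
  obtain ⟨ℓ, hℓ, hu, hv, hle⟩ := exists_vnum_add_vnum_le hI hJ hassoc
  have vnum_eq := (vnum_extensionSum_pow_le hI hJ hA hB hℓ hu hv).antisymm hle
  refine Eq.symm (IsLeast.csInf_eq ⟨⟨ℓ, hℓ, hu, hv, vnum_eq⟩, ?_⟩)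
  rintro _ ⟨ℓ', hℓ', hu', hv', rfl⟩
  exact vnum_extensionSum_pow_le hI hJ hA hB hℓ' hu' hv'

/-- Theorem 4.1: for nonzero proper monomial ideals `I ⊂ R`, `J ⊂ T`
identified with their extensions to `S`, `k ≥ 1`, and nonzero monomial primes `p ⊂ R`,
`q ⊂ T` with `p + q ∈ Ass((I+J)^k)`, one has
`v_{p+q}((I+J)^k) = min{ v_p(I^{k−ℓ}) + v_q(J^{ℓ+1}) : 0 ≤ ℓ < k, p ∈ Ass(I^{k−ℓ}),
q ∈ Ass(J^{ℓ+1}) }`. -/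
theorem stmt7 {K : Type} [Field K] {n m : ℕ}
    (I : Ideal (MvPolynomial (Fin n) K)) (J : Ideal (MvPolynomial (Fin m) K))
    (hInz : I ≠ ⊥) (hIpr : I ≠ ⊤) (hImon : IsMonomialIdeal I)
    (hJnz : J ≠ ⊥) (hJpr : J ≠ ⊤) (hJmon : IsMonomialIdeal J)
    (eI eJ : Ideal (MvPolynomial (Fin n ⊕ Fin m) K))
    (heI : eI = Ideal.map (rename Sum.inl) I)
    (heJ : eJ = Ideal.map (rename Sum.inr) J)
    (k : ℕ) (hk : 1 ≤ k)
    -- `p ⊂ R`, `q ⊂ T` nonzero monomial prime ideals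
    (A : Set (Fin n)) (hA : A.Nonempty) (B : Set (Fin m)) (hB : B.Nonempty)
    (p : Ideal (MvPolynomial (Fin n) K))
    (hp : p = Ideal.span ((fun i => (X i : MvPolynomial (Fin n) K)) '' A))
    (q : Ideal (MvPolynomial (Fin m) K))
    (hq : q = Ideal.span ((fun i => (X i : MvPolynomial (Fin m) K)) '' B))
    (hassoc : Ideal.map (rename Sum.inl) p + Ideal.map (rename Sum.inr) q ∈
      assOf ((eI + eJ) ^ k)) :
    vnum ((eI + eJ) ^ k) (Ideal.map (rename Sum.inl) p + Ideal.map (rename Sum.inr) q) =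
      sInf {d : ℕ | ∃ ℓ : ℕ, ℓ < k ∧ p ∈ assOf (I ^ (k - ℓ)) ∧ q ∈ assOf (J ^ (ℓ + 1)) ∧
        d = vnum (I ^ (k - ℓ)) p + vnum (J ^ (ℓ + 1)) q} := by
  subst heI heJ hp hq
  exact stmt7_general hImon hJmon k A.toFinite hA B.toFinite hB hassoc
end
end
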